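/- Euler–Lagrange characterization: a periodic configuration (u, A) satisfies the Yang–Mills–Higgs equations if and only if for every smooth ℤ²-periodic v : ℝ² → ℂ and a = (a₁, a₂) : ℝ² → ℝ², the derivative at t = 0 of t ↦ E_ε(u + t·v, A + t·a) vanishes. -/

import Mathlib

open MeasureTheory Complex

noncomputable section

/-- Partial derivative in the first coordinate direction. -/
def pd1 {E : Type*} [NormedAddCommGroup E] [NormedSpace ℝ E] (f : ℝ × ℝ → E) (x : ℝ × ℝ) : E :=
  fderiv ℝ f x (1, 0)

/-- Partial derivative in the second coordinate direction. -/
def pd2 {E : Type*} [NormedAddCommGroup E] [NormedSpace ℝ E] (f : ℝ × ℝ → E) (x : ℝ × ℝ) : E :=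
  fderiv ℝ f x (0, 1)

/-- First covariant derivative `D₁f = ∂₁f − iA₁f`. -/
def D1 (A1 : ℝ × ℝ → ℝ) (f : ℝ × ℝ → ℂ) (x : ℝ × ℝ) : ℂ :=
  pd1 f x - Complex.I * (A1 x) * f x

/-- Second covariant derivative `D₂f = ∂₂f − iA₂f`. -/
def D2 (A2 : ℝ × ℝ → ℝ) (f : ℝ × ℝ → ℂ) (x : ℝ × ℝ) : ℂ :=
  pd2 f x - Complex.I * (A2 x) * f x

/-- Curvature function `F = ∂₁A₂ − ∂₂A₁`. -/
def curv (A1 A2 : ℝ × ℝ → ℝ) (x : ℝ × ℝ) : ℝ := pd1 A2 x - pd2 A1 x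

/-- `h = (1 − |u|²)/(2ε²)`. -/
def hfun (ε : ℝ) (u : ℝ × ℝ → ℂ) (x : ℝ × ℝ) : ℝ := (1 - ‖u x‖ ^ 2) / (2 * ε ^ 2)

/-- `σ₊ = D₁u + iD₂u`. -/
def sigP (u : ℝ × ℝ → ℂ) (A1 A2 : ℝ × ℝ → ℝ) (x : ℝ × ℝ) : ℂ :=
  D1 A1 u x + Complex.I * D2 A2 u x

/-- `σ₋ = D₁u − iD₂u`. -/
def sigM (u : ℝ × ℝ → ℂ) (A1 A2 : ℝ × ℝ → ℝ) (x : ℝ × ℝ) : ℂ :=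
  D1 A1 u x - Complex.I * D2 A2 u x

/-- The Yang--Mills--Higgs energy over the fundamental domain `[0,1]²`. -/
def energy (ε : ℝ) (u : ℝ × ℝ → ℂ) (A1 A2 : ℝ × ℝ → ℝ) : ℝ :=
  ∫ x in Set.Icc (0:ℝ) 1 ×ˢ Set.Icc (0:ℝ) 1,
    (ε ^ 2 * curv A1 A2 x ^ 2 + ‖D1 A1 u x‖ ^ 2 + ‖D2 A2 u x‖ ^ 2
      + (1 - ‖u x‖ ^ 2) ^ 2 / (4 * ε ^ 2))

/-- `ℤ²`-periodicity. -/
def Periodic2 {E : Type*} (f : ℝ × ℝ → E) : Prop :=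
  ∀ x : ℝ × ℝ, f (x.1 + 1, x.2) = f x ∧ f (x.1, x.2 + 1) = f x

/-- The Yang--Mills--Higgs equations on all of `ℝ²`. -/
def IsYMH (ε : ℝ) (u : ℝ × ℝ → ℂ) (A1 A2 : ℝ × ℝ → ℝ) : Prop :=
  (∀ x, -(D1 A1 (D1 A1 u) x + D2 A2 (D2 A2 u) x) = (hfun ε u x : ℂ) * u x) ∧
  (∀ x, ε ^ 2 * pd2 (curv A1 A2) x = ((starRingEnd ℂ) (u x) * D1 A1 u x).im) ∧
  (∀ x, ε ^ 2 * pd1 (curv A1 A2) x = -((starRingEnd ℂ) (u x) * D2 A2 u x).im)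

/-- The Yang--Mills--Higgs equations on an open set `U ⊆ ℝ²`. -/
def IsYMHOn (ε : ℝ) (u : ℝ × ℝ → ℂ) (A1 A2 : ℝ × ℝ → ℝ) (U : Set (ℝ × ℝ)) : Prop :=
  (∀ x ∈ U, -(D1 A1 (D1 A1 u) x + D2 A2 (D2 A2 u) x) = (hfun ε u x : ℂ) * u x) ∧
  (∀ x ∈ U, ε ^ 2 * pd2 (curv A1 A2) x = ((starRingEnd ℂ) (u x) * D1 A1 u x).im) ∧
  (∀ x ∈ U, ε ^ 2 * pd1 (curv A1 A2) x = -((starRingEnd ℂ) (u x) * D2 A2 u x).im)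

/-- Stability: nonnegative second variation of the energy along all smooth periodic
variations of the section and the connection. -/
def Stable (ε : ℝ) (u : ℝ × ℝ → ℂ) (A1 A2 : ℝ × ℝ → ℝ) : Prop :=
  ∀ v : ℝ × ℝ → ℂ, ∀ a1 a2 : ℝ × ℝ → ℝ,
    ContDiff ℝ (⊤ : ℕ∞) v → Periodic2 v → ContDiff ℝ (⊤ : ℕ∞) a1 → Periodic2 a1 →
    ContDiff ℝ (⊤ : ℕ∞) a2 → Periodic2 a2 →
    0 ≤ iteratedDeriv 2 (fun t : ℝ =>
      energy ε (fun x => u x + t • v x)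
        (fun x => A1 x + t * a1 x) (fun x => A2 x + t * a2 x)) 0

def dotc (z w : ℂ) : ℝ := z.re * w.re + z.im * w.im

theorem dotc_self (z : ℂ) : ‖z‖ ^ 2 = dotc z z := by
  rw [Complex.sq_norm, Complex.normSq_apply, dotc]

theorem cont_dotc {f g : ℝ × ℝ → ℂ} (hf : Continuous f) (hg : Continuous g) :
    Continuous fun x => dotc (f x) (g x) := by
  unfold dotc; fun_prop

theorem smooth_dotc {f g : ℝ × ℝ → ℂ} (hf : ContDiff ℝ (⊤ : ℕ∞) f) (hg : ContDiff ℝ (⊤ : ℕ∞) g) :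
    ContDiff ℝ (⊤ : ℕ∞) fun x => dotc (f x) (g x) := by
  unfold dotc
  have r : ∀ {f : ℝ × ℝ → ℂ}, ContDiff ℝ (⊤ : ℕ∞) f → ContDiff ℝ (⊤ : ℕ∞) fun x => (f x).re :=
    fun h => Complex.reCLM.contDiff.comp h
  have i : ∀ {f : ℝ × ℝ → ℂ}, ContDiff ℝ (⊤ : ℕ∞) f → ContDiff ℝ (⊤ : ℕ∞) fun x => (f x).im :=
    fun h => Complex.imCLM.contDiff.comp h
  exact ((r hf).mul (r hg)).add ((i hf).mul (i hg))

abbrev Sq : Set (ℝ × ℝ) := Set.Icc (0:ℝ) 1 ×ˢ Set.Icc (0:ℝ) 1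

theorem Sq_eq : Sq = Set.Icc ((0:ℝ), (0:ℝ)) (1, 1) := by
  rw [Sq, Set.Icc_prod_Icc]

theorem integ {f : ℝ × ℝ → ℝ} (hf : Continuous f) : IntegrableOn f Sq :=
  hf.continuousOn.integrableOn_compact (isCompact_Icc.prod isCompact_Icc)

theorem deriv_poly (e : ℝ → ℝ × ℝ → ℝ) (c0 c1 c2 c3 c4 : ℝ × ℝ → ℝ)
    (h0 : Continuous c0) (h1 : Continuous c1) (h2 : Continuous c2) (h3 : Continuous c3)
    (h4 : Continuous c4)
    (he : ∀ t x, e t x = c0 x + t * c1 x + t ^ 2 * c2 x + t ^ 3 * c3 x + t ^ 4 * c4 x) :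
    deriv (fun t : ℝ => ∫ x in Sq, e t x) 0 = ∫ x in Sq, c1 x := by
  have key : (fun t : ℝ => ∫ x in Sq, e t x) = fun t =>
      (∫ x in Sq, c0 x) + t * (∫ x in Sq, c1 x) + t ^ 2 * (∫ x in Sq, c2 x)
        + t ^ 3 * (∫ x in Sq, c3 x) + t ^ 4 * (∫ x in Sq, c4 x) := by
    funext t
    simp_rw [he]
    rw [integral_add, integral_add, integral_add, integral_add]
    · simp only [integral_const_mul]
    all_goals exact integ (by fun_prop)
  rw [key]
  generalize (∫ x in Sq, c0 x) = a0
  generalize (∫ x in Sq, c1 x) = a1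
  generalize (∫ x in Sq, c2 x) = a2
  generalize (∫ x in Sq, c3 x) = a3
  generalize (∫ x in Sq, c4 x) = a4
  have := (((((hasDerivAt_id (0:ℝ)).mul_const a1).const_add a0).add
    (((hasDerivAt_id (0:ℝ)).pow 2).mul_const a2)).add
    (((hasDerivAt_id (0:ℝ)).pow 3).mul_const a3)).add
    (((hasDerivAt_id (0:ℝ)).pow 4).mul_const a4)
  have h := this.deriv
  simp at h
  exact h

theorem deriv_dens (e : ℝ → ℝ × ℝ → ℝ) (α β : ℝ) (F f W m n : ℝ × ℝ → ℝ)
    (P Q S P' Q' S' : ℝ × ℝ → ℂ)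
    (hF : Continuous F) (hf : Continuous f) (hW : Continuous W) (hm : Continuous m)
    (hn : Continuous n) (hP : Continuous P) (hQ : Continuous Q) (hS : Continuous S)
    (hP' : Continuous P') (hQ' : Continuous Q') (hS' : Continuous S')
    (he : ∀ t x, e t x = α * (F x + t * f x) ^ 2
      + ‖P x + t * Q x + t ^ 2 * S x‖ ^ 2 + ‖P' x + t * Q' x + t ^ 2 * S' x‖ ^ 2
      + (W x - 2 * t * m x - t ^ 2 * n x) ^ 2 * β) :
    deriv (fun t : ℝ => ∫ x in Sq, e t x) 0 = ∫ x in Sq,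
      (2 * α * F x * f x + 2 * dotc (P x) (Q x) + 2 * dotc (P' x) (Q' x)
        - 4 * W x * m x * β) := by
  apply deriv_poly e
    (fun x => α * F x ^ 2 + dotc (P x) (P x) + dotc (P' x) (P' x) + W x ^ 2 * β) _
    (fun x => α * f x ^ 2 + (dotc (Q x) (Q x) + 2 * dotc (P x) (S x)) +
      (dotc (Q' x) (Q' x) + 2 * dotc (P' x) (S' x)) + (4 * m x ^ 2 - 2 * W x * n x) * β)
    (fun x => 2 * dotc (Q x) (S x) + 2 * dotc (Q' x) (S' x) + 4 * m x * n x * β)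
    (fun x => dotc (S x) (S x) + dotc (S' x) (S' x) + n x ^ 2 * β)
  · unfold dotc; fun_prop
  · unfold dotc; fun_prop
  · unfold dotc; fun_prop
  · unfold dotc; fun_prop
  · unfold dotc; fun_prop
  · intro t x
    rw [he, dotc_self, dotc_self]
    simp only [dotc, Complex.add_re, Complex.add_im, Complex.re_ofReal_mul, Complex.im_ofReal_mul,
      ← Complex.ofReal_pow]
    ring

section calc1
variable {E : Type*} [NormedAddCommGroup E] [NormedSpace ℝ E]

theorem smooth_pd1 {f : ℝ × ℝ → E} (hf : ContDiff ℝ (⊤ : ℕ∞) f) :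
    ContDiff ℝ (⊤ : ℕ∞) (pd1 f) := by
  have : ContDiff ℝ (⊤ : ℕ∞) (fderiv ℝ f) := hf.fderiv_right (by simp)
  exact this.clm_apply contDiff_const

theorem smooth_pd2 {f : ℝ × ℝ → E} (hf : ContDiff ℝ (⊤ : ℕ∞) f) :
    ContDiff ℝ (⊤ : ℕ∞) (pd2 f) := by
  have : ContDiff ℝ (⊤ : ℕ∞) (fderiv ℝ f) := hf.fderiv_right (by simp)
  exact this.clm_apply contDiff_const

theorem per_fderiv {f : ℝ × ℝ → E} (hf : Periodic2 f) : Periodic2 (fderiv ℝ f) := by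
  intro x
  constructor
  · have h : (fun y => f (y + ((1:ℝ), (0:ℝ)))) = f := by
      funext y
      have := (hf y).1
      rw [← this]; congr 1; ext <;> simp
    have h2 := fderiv_comp_add_right (𝕜 := ℝ) (f := f) (x := x) ((1:ℝ), (0:ℝ))
    rw [h] at h2
    rw [h2]; congr 1; ext <;> simp
  · have h : (fun y => f (y + ((0:ℝ), (1:ℝ)))) = f := by
      funext y
      have := (hf y).2
      rw [← this]; congr 1; ext <;> simp
    have h2 := fderiv_comp_add_right (𝕜 := ℝ) (f := f) (x := x) ((0:ℝ), (1:ℝ))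
    rw [h] at h2
    rw [h2]; congr 1; ext <;> simp

theorem per_pd1 {f : ℝ × ℝ → E} (hf : Periodic2 f) : Periodic2 (pd1 f) := by
  intro x
  simp only [pd1, (per_fderiv hf x).1, (per_fderiv hf x).2, and_self]

theorem per_pd2 {f : ℝ × ℝ → E} (hf : Periodic2 f) : Periodic2 (pd2 f) := by
  intro x
  simp only [pd2, (per_fderiv hf x).1, (per_fderiv hf x).2, and_self]

end calc1

theorem smooth_ofReal {f : ℝ × ℝ → ℝ} (hf : ContDiff ℝ (⊤ : ℕ∞) f) :
    ContDiff ℝ (⊤ : ℕ∞) (fun x => (f x : ℂ)) := Complex.ofRealCLM.contDiff.comp hf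

theorem smooth_D1 {A : ℝ × ℝ → ℝ} {f : ℝ × ℝ → ℂ} (hA : ContDiff ℝ (⊤ : ℕ∞) A)
    (hf : ContDiff ℝ (⊤ : ℕ∞) f) : ContDiff ℝ (⊤ : ℕ∞) (D1 A f) :=
  (smooth_pd1 hf).sub ((contDiff_const.mul (smooth_ofReal hA)).mul hf)

theorem smooth_D2 {A : ℝ × ℝ → ℝ} {f : ℝ × ℝ → ℂ} (hA : ContDiff ℝ (⊤ : ℕ∞) A)
    (hf : ContDiff ℝ (⊤ : ℕ∞) f) : ContDiff ℝ (⊤ : ℕ∞) (D2 A f) :=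
  (smooth_pd2 hf).sub ((contDiff_const.mul (smooth_ofReal hA)).mul hf)

theorem smooth_curv {A B : ℝ × ℝ → ℝ} (hA : ContDiff ℝ (⊤ : ℕ∞) A)
    (hB : ContDiff ℝ (⊤ : ℕ∞) B) : ContDiff ℝ (⊤ : ℕ∞) (curv A B) :=
  (smooth_pd1 hB).sub (smooth_pd2 hA)

theorem per_D1 {A : ℝ × ℝ → ℝ} {f : ℝ × ℝ → ℂ} (hA : Periodic2 A)
    (hf : Periodic2 f) : Periodic2 (D1 A f) := by
  intro x
  simp only [D1, (hA x).1, (hA x).2, (hf x).1, (hf x).2, (per_pd1 hf x).1, (per_pd1 hf x).2,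
    and_self]

theorem per_D2 {A : ℝ × ℝ → ℝ} {f : ℝ × ℝ → ℂ} (hA : Periodic2 A)
    (hf : Periodic2 f) : Periodic2 (D2 A f) := by
  intro x
  simp only [D2, (hA x).1, (hA x).2, (hf x).1, (hf x).2, (per_pd2 hf x).1, (per_pd2 hf x).2,
    and_self]

theorem per_curv {A B : ℝ × ℝ → ℝ} (hA : Periodic2 A)
    (hB : Periodic2 B) : Periodic2 (curv A B) := by
  intro x
  simp only [curv, (per_pd1 hB x).1, (per_pd1 hB x).2, (per_pd2 hA x).1, (per_pd2 hA x).2,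
    and_self]

theorem int_div_zero {f g : ℝ × ℝ → ℝ} (hf : ContDiff ℝ (⊤ : ℕ∞) f) (hg : ContDiff ℝ (⊤ : ℕ∞) g)
    (hfp : Periodic2 f) (hgp : Periodic2 g) : ∫ x in Sq, (pd1 f x + pd2 g x) = 0 := by
  have h := integral_divergence_prod_Icc_of_hasFDerivAt_of_le f g (fderiv ℝ f) (fderiv ℝ g)
    ((0:ℝ), (0:ℝ)) (1, 1) (by simp [Prod.le_def]) hf.continuous.continuousOn hg.continuous.continuousOn
    (fun x _ => (hf.differentiable (by simp) x).hasFDerivAt)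
    (fun x _ => (hg.differentiable (by simp) x).hasFDerivAt)
    (by
      rw [← Sq_eq]
      exact integ ((smooth_pd1 hf).continuous.add (smooth_pd2 hg).continuous))
  rw [← Sq_eq] at h
  unfold pd1 pd2
  rw [h]
  have e1 : ∀ y, f (1, y) = f (0, y) := fun y => by simpa using (hfp (0, y)).1
  have e2 : ∀ y, g (y, 1) = g (y, 0) := fun y => by simpa using (hgp (y, 0)).2
  simp [e1, e2]

theorem per_int {E : Type*} {f : ℝ × ℝ → E} (hf : Periodic2 f) (x : ℝ × ℝ) :
    f x = f (Int.fract x.1, Int.fract x.2) := by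
  have h1 : ∀ y, Function.Periodic (fun s => f (s, y)) 1 := fun y s => (hf (s, y)).1
  have h2 : ∀ s, Function.Periodic (fun y => f (s, y)) 1 := fun s y => (hf (s, y)).2
  have a := (h1 (Int.fract x.2)).sub_int_mul_eq (x := x.1) ⌊x.1⌋
  have b := (h2 x.1).sub_int_mul_eq (x := x.2) ⌊x.2⌋
  simp only [mul_one, Int.self_sub_floor] at a b
  rw [a, b]

theorem zero_of_int {f : ℝ × ℝ → ℝ} (hf : Continuous f) (hp : Periodic2 f) (h0 : ∀ x, 0 ≤ f x)
    (hi : ∫ x in Sq, f x = 0) (x : ℝ × ℝ) : f x = 0 := by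
  rw [setIntegral_eq_zero_iff_of_nonneg_ae (Filter.Eventually.of_forall h0) (integ hf)] at hi
  have : Set.EqOn f 0 Sq := Measure.eqOn_of_ae_eq hi hf.continuousOn continuousOn_const (by
    rw [Sq, interior_prod_eq, closure_prod_eq, interior_Icc, closure_Ioo (by norm_num)])
  rw [per_int hp]
  exact this ⟨⟨Int.fract_nonneg _, (Int.fract_lt_one _).le⟩,
    ⟨Int.fract_nonneg _, (Int.fract_lt_one _).le⟩⟩

theorem pd_mul {f g : ℝ × ℝ → ℝ} (hf : ContDiff ℝ (⊤ : ℕ∞) f) (hg : ContDiff ℝ (⊤ : ℕ∞) g)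
    (c : ℝ) (x w : ℝ × ℝ) :
    fderiv ℝ (fun x => c * f x * g x) x w =
      c * (fderiv ℝ f x w * g x + f x * fderiv ℝ g x w) := by
  have h1 := (hf.differentiable (by simp) x).hasFDerivAt
  have h2 := (hg.differentiable (by simp) x).hasFDerivAt
  have := ((h1.const_mul c).mul h2).fderiv
  erw [this]
  simp
  ring

theorem pd_dotc {f g : ℝ × ℝ → ℂ} (hf : ContDiff ℝ (⊤ : ℕ∞) f) (hg : ContDiff ℝ (⊤ : ℕ∞) g)
    (x w : ℝ × ℝ) :
    fderiv ℝ (fun x => dotc (f x) (g x)) x w =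
      dotc (fderiv ℝ f x w) (g x) + dotc (f x) (fderiv ℝ g x w) := by
  have h1 := (hf.differentiable (by simp) x).hasFDerivAt
  have h2 := (hg.differentiable (by simp) x).hasFDerivAt
  have r1 := (Complex.reCLM.hasFDerivAt (x := f x)).comp x h1
  have r2 := (Complex.reCLM.hasFDerivAt (x := g x)).comp x h2
  have i1 := (Complex.imCLM.hasFDerivAt (x := f x)).comp x h1
  have i2 := (Complex.imCLM.hasFDerivAt (x := g x)).comp x h2
  have := ((r1.mul r2).add (i1.mul i2)).fderiv
  erw [this]
  simp [dotc]
  ring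

theorem fd_add {E : Type*} [NormedAddCommGroup E] [NormedSpace ℝ E] {f g : ℝ × ℝ → E}
    (hf : ContDiff ℝ (⊤ : ℕ∞) f) (hg : ContDiff ℝ (⊤ : ℕ∞) g)
    (t : ℝ) (x w : ℝ × ℝ) :
    fderiv ℝ (fun x => f x + t • g x) x w = fderiv ℝ f x w + t • fderiv ℝ g x w := by
  have h1 := (hf.differentiable (by simp) x).hasFDerivAt
  have h2 := (hg.differentiable (by simp) x).hasFDerivAt
  have := (h1.add (h2.const_smul t)).fderiv
  erw [this]
  simp

/-- residuals -/
def res0 (ε : ℝ) (u : ℝ × ℝ → ℂ) (A1 A2 : ℝ × ℝ → ℝ) (x : ℝ × ℝ) : ℂ :=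
  -(D1 A1 (D1 A1 u) x + D2 A2 (D2 A2 u) x) - (hfun ε u x : ℂ) * u x

def res1 (ε : ℝ) (u : ℝ × ℝ → ℂ) (A1 A2 : ℝ × ℝ → ℝ) (x : ℝ × ℝ) : ℝ :=
  ε ^ 2 * pd2 (curv A1 A2) x - ((starRingEnd ℂ) (u x) * D1 A1 u x).im

def res2 (ε : ℝ) (u : ℝ × ℝ → ℂ) (A1 A2 : ℝ × ℝ → ℝ) (x : ℝ × ℝ) : ℝ :=
  - (ε ^ 2 * pd1 (curv A1 A2) x) - ((starRingEnd ℂ) (u x) * D2 A2 u x).im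

theorem first_var (ε : ℝ) (hε : 0 < ε) (u v : ℝ × ℝ → ℂ) (A1 A2 a1 a2 : ℝ × ℝ → ℝ)
    (hu : ContDiff ℝ (⊤ : ℕ∞) u) (hup : Periodic2 u)
    (hA1 : ContDiff ℝ (⊤ : ℕ∞) A1) (hA1p : Periodic2 A1)
    (hA2 : ContDiff ℝ (⊤ : ℕ∞) A2) (hA2p : Periodic2 A2)
    (hv : ContDiff ℝ (⊤ : ℕ∞) v) (hvp : Periodic2 v)
    (ha1 : ContDiff ℝ (⊤ : ℕ∞) a1) (ha1p : Periodic2 a1)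
    (ha2 : ContDiff ℝ (⊤ : ℕ∞) a2) (ha2p : Periodic2 a2)
    (hr0 : Continuous (res0 ε u A1 A2)) (hr1 : Continuous (res1 ε u A1 A2))
    (hr2 : Continuous (res2 ε u A1 A2)) :
    deriv (fun t : ℝ =>
          energy ε (fun x => u x + t • v x)
            (fun x => A1 x + t * a1 x) (fun x => A2 x + t * a2 x)) 0 =
    2 * ∫ x in Sq, (dotc (res0 ε u A1 A2 x) (v x) + res1 ε u A1 A2 x * a1 x
      + res2 ε u A1 A2 x * a2 x) := by
  have cu := hu.continuous
  have cv := hv.continuous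
  have ca1 := ha1.continuous
  have ca2 := ha2.continuous
  have hF := smooth_curv hA1 hA2
  have h1u := smooth_D1 hA1 hu
  have h2u := smooth_D2 hA2 hu
  have cF := hF.continuous
  have cf := (smooth_curv ha1 ha2).continuous
  have c1u := h1u.continuous
  have c2u := h2u.continuous
  have c1v := (smooth_D1 hA1 hv).continuous
  have c2v := (smooth_D2 hA2 hv).continuous
  unfold energy
  rw [deriv_dens _ (ε ^ 2) (1 / (4 * ε ^ 2)) (curv A1 A2) (curv a1 a2)
    (fun x => 1 - dotc (u x) (u x)) (fun x => dotc (u x) (v x)) (fun x => dotc (v x) (v x))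
    (D1 A1 u) (fun x => D1 A1 v x - Complex.I * a1 x * u x) (fun x => - (Complex.I * a1 x * v x))
    (D2 A2 u) (fun x => D2 A2 v x - Complex.I * a2 x * u x) (fun x => - (Complex.I * a2 x * v x))
    cF cf (by unfold dotc; fun_prop) (by unfold dotc; fun_prop) (by unfold dotc; fun_prop)
    c1u (by fun_prop) (by fun_prop) c2u (by fun_prop) (by fun_prop)]
  · have hG1 : ContDiff ℝ (⊤ : ℕ∞) fun x => ε ^ 2 * curv A1 A2 x * a2 x :=
      (contDiff_const.mul hF).mul ha2
    have hG1' := smooth_dotc h1u hv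
    have hG2 : ContDiff ℝ (⊤ : ℕ∞) fun x => -ε ^ 2 * curv A1 A2 x * a1 x :=
      (contDiff_const.mul hF).mul ha1
    have hG2' := smooth_dotc h2u hv
    have pF := per_curv hA1p hA2p
    have p1 := per_D1 hA1p hup
    have p2 := per_D2 hA2p hup
    have z1 := int_div_zero hG1 hG2
      (fun x => by simp only [(pF x).1, (pF x).2, (ha2p x).1, (ha2p x).2, and_self])
      (fun x => by simp only [(pF x).1, (pF x).2, (ha1p x).1, (ha1p x).2, and_self])
    have z2 := int_div_zero hG1' hG2'
      (fun x => by simp only [(p1 x).1, (p1 x).2, (hvp x).1, (hvp x).2, and_self])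
      (fun x => by simp only [(p2 x).1, (p2 x).2, (hvp x).1, (hvp x).2, and_self])
    have i1 := integ ((smooth_pd1 hG1).continuous.add (smooth_pd2 hG2).continuous)
    have i2 := integ ((smooth_pd1 hG1').continuous.add (smooth_pd2 hG2').continuous)
    have i0 : IntegrableOn (fun x => (dotc (res0 ε u A1 A2 x) (v x) + res1 ε u A1 A2 x * a1 x
      + res2 ε u A1 A2 x * a2 x)) Sq :=
      integ (((cont_dotc hr0 cv).add (hr1.mul ca1)).add (hr2.mul ca2))
    have key : ∀ x, (2 * ε ^ 2 * curv A1 A2 x * curv a1 a2 x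
        + 2 * dotc (D1 A1 u x) (D1 A1 v x - Complex.I * a1 x * u x)
        + 2 * dotc (D2 A2 u x) (D2 A2 v x - Complex.I * a2 x * u x)
        - 4 * (1 - dotc (u x) (u x)) * dotc (u x) (v x) * (1 / (4 * ε ^ 2))) =
        2 * ((dotc (res0 ε u A1 A2 x) (v x) + res1 ε u A1 A2 x * a1 x
            + res2 ε u A1 A2 x * a2 x)
          + (pd1 (fun x => ε ^ 2 * curv A1 A2 x * a2 x) x
            + pd2 (fun x => -ε ^ 2 * curv A1 A2 x * a1 x) x)
          + (pd1 (fun x => dotc (D1 A1 u x) (v x)) x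
            + pd2 (fun x => dotc (D2 A2 u x) (v x)) x)) := by
      intro x
      have q1 := pd_mul hF ha2 (ε ^ 2) x (1, 0)
      have q2 := pd_mul hF ha1 (-ε ^ 2) x (0, 1)
      have q3 := pd_dotc h1u hv x (1, 0)
      have q4 := pd_dotc h2u hv x (0, 1)
      change pd1 _ x = _ * (pd1 _ x * _ + _ * pd1 _ x) at q1
      change pd2 _ x = _ * (pd2 _ x * _ + _ * pd2 _ x) at q2
      change pd1 _ x = dotc (pd1 _ x) _ + dotc _ (pd1 _ x) at q3
      change pd2 _ x = dotc (pd2 _ x) _ + dotc _ (pd2 _ x) at q4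
      rw [q1, q2, q3, q4]
      have d1 : D1 A1 v x = pd1 v x - Complex.I * (A1 x) * v x := rfl
      have d2 : D2 A2 v x = pd2 v x - Complex.I * (A2 x) * v x := rfl
      have d3 : D1 A1 (D1 A1 u) x = pd1 (D1 A1 u) x - Complex.I * (A1 x) * D1 A1 u x := rfl
      have d4 : D2 A2 (D2 A2 u) x = pd2 (D2 A2 u) x - Complex.I * (A2 x) * D2 A2 u x := rfl
      have d5 : curv a1 a2 x = pd1 a2 x - pd2 a1 x := rfl
      rw [res0, res1, res2, d1, d2, d3, d4, d5, hfun, dotc_self]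
      generalize D1 A1 u x = p
      generalize D2 A2 u x = q
      generalize pd1 (D1 A1 u) x = p'
      generalize pd2 (D2 A2 u) x = q'
      simp only [dotc, Complex.add_re, Complex.add_im, Complex.sub_re, Complex.sub_im,
        Complex.mul_re, Complex.mul_im, Complex.neg_re, Complex.neg_im, Complex.I_re, Complex.I_im,
        Complex.ofReal_re, Complex.ofReal_im, Complex.conj_re, Complex.conj_im]
      field_simp
      ring
    simp_rw [key]
    rw [integral_const_mul]
    congr 1
    refine (integral_add (i0.add i1) i2).trans ?_
    refine (congrArg₂ (· + ·) (integral_add i0 i1) z2).trans ?_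
    refine (congrArg (fun s => _ + s + 0) z1).trans ?_
    simp only [add_zero]
  · intro t x
    have e1 : curv (fun x => A1 x + t * a1 x) (fun x => A2 x + t * a2 x) x
        = curv A1 A2 x + t * curv a1 a2 x := by
      have q1 := fd_add hA2 ha2 t x (1, 0)
      have q2 := fd_add hA1 ha1 t x (0, 1)
      simp only [smul_eq_mul] at q1 q2
      unfold curv pd1 pd2
      rw [q1, q2]; ring
    have e2 : D1 (fun x => A1 x + t * a1 x) (fun x => u x + t • v x) x
        = D1 A1 u x + t * (D1 A1 v x - Complex.I * a1 x * u x)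
          + t ^ 2 * (-(Complex.I * a1 x * v x)) := by
      have q1 := fd_add hu hv t x (1, 0)
      unfold D1 pd1
      rw [q1]; simp only [Complex.real_smul]; push_cast; ring
    have e3 : D2 (fun x => A2 x + t * a2 x) (fun x => u x + t • v x) x
        = D2 A2 u x + t * (D2 A2 v x - Complex.I * a2 x * u x)
          + t ^ 2 * (-(Complex.I * a2 x * v x)) := by
      have q1 := fd_add hu hv t x (0, 1)
      unfold D2 pd2
      rw [q1]; simp only [Complex.real_smul]; push_cast; ring
    have e4 : 1 - ‖u x + t • v x‖ ^ 2 = 1 - dotc (u x) (u x) - 2 * t * dotc (u x) (v x)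
        - t ^ 2 * dotc (v x) (v x) := by
      rw [dotc_self]; simp [dotc]; ring
    rw [e1, e2, e3, e4]
    ring

theorem smooth_res0 (ε : ℝ) {u : ℝ × ℝ → ℂ} {A1 A2 : ℝ × ℝ → ℝ}
    (hu : ContDiff ℝ (⊤ : ℕ∞) u) (hA1 : ContDiff ℝ (⊤ : ℕ∞) A1) (hA2 : ContDiff ℝ (⊤ : ℕ∞) A2) :
    ContDiff ℝ (⊤ : ℕ∞) (res0 ε u A1 A2) := by
  have h : ContDiff ℝ (⊤ : ℕ∞) (hfun ε u) := by
    unfold hfun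
    simp_rw [dotc_self]
    exact (contDiff_const.sub (smooth_dotc hu hu)).div_const _
  exact ((smooth_D1 hA1 (smooth_D1 hA1 hu)).add (smooth_D2 hA2 (smooth_D2 hA2 hu))).neg.sub
    ((smooth_ofReal h).mul hu)

theorem im_conj_mul (z w : ℂ) : ((starRingEnd ℂ) z * w).im = dotc (Complex.I * z) w := by
  simp [dotc]; ring

theorem smooth_res1 (ε : ℝ) {u : ℝ × ℝ → ℂ} {A1 A2 : ℝ × ℝ → ℝ}
    (hu : ContDiff ℝ (⊤ : ℕ∞) u) (hA1 : ContDiff ℝ (⊤ : ℕ∞) A1) (hA2 : ContDiff ℝ (⊤ : ℕ∞) A2) :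
    ContDiff ℝ (⊤ : ℕ∞) (res1 ε u A1 A2) := by
  unfold res1
  simp_rw [im_conj_mul]
  exact (contDiff_const.mul (smooth_pd2 (smooth_curv hA1 hA2))).sub
    (smooth_dotc (contDiff_const.mul hu) (smooth_D1 hA1 hu))

theorem smooth_res2 (ε : ℝ) {u : ℝ × ℝ → ℂ} {A1 A2 : ℝ × ℝ → ℝ}
    (hu : ContDiff ℝ (⊤ : ℕ∞) u) (hA1 : ContDiff ℝ (⊤ : ℕ∞) A1) (hA2 : ContDiff ℝ (⊤ : ℕ∞) A2) :
    ContDiff ℝ (⊤ : ℕ∞) (res2 ε u A1 A2) := by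
  unfold res2
  simp_rw [im_conj_mul]
  exact (contDiff_const.mul (smooth_pd1 (smooth_curv hA1 hA2))).neg.sub
    (smooth_dotc (contDiff_const.mul hu) (smooth_D2 hA2 hu))

/-- Euler--Lagrange characterization: `(u, A)` solves the Yang--Mills--Higgs equations iff
the first variation of the energy vanishes for all smooth periodic test pairs. -/
theorem YMH_iff_first_variation_vanishes
    (ε : ℝ) (hε : 0 < ε) (u : ℝ × ℝ → ℂ) (A1 A2 : ℝ × ℝ → ℝ)
    (hu : ContDiff ℝ (⊤ : ℕ∞) u) (hup : Periodic2 u)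
    (hA1 : ContDiff ℝ (⊤ : ℕ∞) A1) (hA1p : Periodic2 A1)
    (hA2 : ContDiff ℝ (⊤ : ℕ∞) A2) (hA2p : Periodic2 A2) :
    IsYMH ε u A1 A2 ↔
      ∀ v : ℝ × ℝ → ℂ, ∀ a1 a2 : ℝ × ℝ → ℝ,
        ContDiff ℝ (⊤ : ℕ∞) v → Periodic2 v → ContDiff ℝ (⊤ : ℕ∞) a1 → Periodic2 a1 →
        ContDiff ℝ (⊤ : ℕ∞) a2 → Periodic2 a2 →
        deriv (fun t : ℝ =>
          energy ε (fun x => u x + t • v x)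
            (fun x => A1 x + t * a1 x) (fun x => A2 x + t * a2 x)) 0 = 0 := by
  have s0 := smooth_res0 ε hu hA1 hA2
  have s1 := smooth_res1 ε hu hA1 hA2
  have s2 := smooth_res2 ε hu hA1 hA2
  have hF := per_curv hA1p hA2p
  have h1 := per_D1 hA1p hup
  have h2 := per_D2 hA2p hup
  have h11 := per_D1 hA1p h1
  have h22 := per_D2 hA2p h2
  have p0 : Periodic2 (res0 ε u A1 A2) := fun x => by
    simp only [res0, hfun, (hup x).1, (hup x).2, (h11 x).1, (h11 x).2, (h22 x).1, (h22 x).2,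
      and_self]
  have p1 : Periodic2 (res1 ε u A1 A2) := fun x => by
    simp only [res1, (hup x).1, (hup x).2, (h1 x).1, (h1 x).2, (per_pd2 hF x).1,
      (per_pd2 hF x).2, and_self]
  have p2 : Periodic2 (res2 ε u A1 A2) := fun x => by
    simp only [res2, (hup x).1, (hup x).2, (h2 x).1, (h2 x).2, (per_pd1 hF x).1,
      (per_pd1 hF x).2, and_self]
  have c0 := s0.continuous
  have c1 := s1.continuous
  have c2 := s2.continuous
  constructor
  · rintro ⟨e0, e1, e2⟩ v a1 a2 hv hvp ha1 ha1p ha2 ha2p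
    rw [first_var ε hε u v A1 A2 a1 a2 hu hup hA1 hA1p hA2 hA2p hv hvp ha1 ha1p ha2 ha2p c0 c1 c2]
    have f0 : ∀ x, res0 ε u A1 A2 x = 0 := fun x => by rw [res0, e0 x, sub_self]
    have f1 : ∀ x, res1 ε u A1 A2 x = 0 := fun x => by rw [res1, e1 x, sub_self]
    have f2 : ∀ x, res2 ε u A1 A2 x = 0 := fun x => by rw [res2, e2 x]; ring
    simp [f0, f1, f2, dotc]
  · intro H
    have h := H _ _ _ s0 p0 s1 p1 s2 p2
    rw [first_var ε hε u _ A1 A2 _ _ hu hup hA1 hA1p hA2 hA2p s0 p0 s1 p1 s2 p2 c0 c1 c2] at h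
    have hi := (mul_eq_zero.1 h).resolve_left (by norm_num)
    have z := zero_of_int (f := fun x => dotc (res0 ε u A1 A2 x) (res0 ε u A1 A2 x)
        + res1 ε u A1 A2 x * res1 ε u A1 A2 x + res2 ε u A1 A2 x * res2 ε u A1 A2 x)
      (((cont_dotc c0 c0).add (c1.mul c1)).add (c2.mul c2))
      (fun x => by simp only [(p0 x).1, (p0 x).2, (p1 x).1, (p1 x).2, (p2 x).1, (p2 x).2, and_self])
      (fun x => by
        rw [← dotc_self]
        nlinarith [sq_nonneg ‖res0 ε u A1 A2 x‖, mul_self_nonneg (res1 ε u A1 A2 x),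
          mul_self_nonneg (res2 ε u A1 A2 x)]) hi
    have z' : ∀ x, res0 ε u A1 A2 x = 0 ∧ res1 ε u A1 A2 x = 0 ∧ res2 ε u A1 A2 x = 0 := by
      intro x
      have zx := z x
      rw [← dotc_self] at zx
      have n0 := sq_nonneg ‖res0 ε u A1 A2 x‖
      have n1 := mul_self_nonneg (res1 ε u A1 A2 x)
      have n2 := mul_self_nonneg (res2 ε u A1 A2 x)
      refine ⟨?_, ?_, ?_⟩
      · exact norm_eq_zero.1 (pow_eq_zero_iff (two_ne_zero)|>.1 (by linarith))
      · exact mul_self_eq_zero.1 (by linarith)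
      · exact mul_self_eq_zero.1 (by linarith)
    refine ⟨fun x => ?_, fun x => ?_, fun x => ?_⟩
    · exact sub_eq_zero.1 (z' x).1
    · exact sub_eq_zero.1 (z' x).2.1
    · have := (z' x).2.2
      rw [res2] at this
      linarith
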